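/- (Gaussian mechanism.) Let p ≥ 1, s > 0, 0 < ε < 1, 0 < δ < 1, and set σ² = 2(s²/ε²)·ln(1.25/δ). Let μ₁, μ₂ ∈ ℝᵖ with ‖μ₁ − μ₂‖₂ ≤ s. Then for every Borel set S ⊆ ℝᵖ, γ_{μ₁,σ²}(S) ≤ e^ε·γ_{μ₂,σ²}(S) + δ. -/

import Mathlib

open MeasureTheory ProbabilityTheory
open scoped NNReal

/-- The Gaussian measure on `ℝᵖ` with mean `μ` and covariance `v·I`, i.e. the
product of the one-dimensional Gaussian measures `N(μ i, v)`. -/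
noncomputable def gaussianPi {p : ℕ} (μ : Fin p → ℝ) (v : ℝ≥0) :
    Measure (Fin p → ℝ) :=
  Measure.pi fun i => gaussianReal (μ i) v

lemma gm_density_one (a b : ℝ) {v : ℝ≥0} (hv : v ≠ 0) :
    gaussianReal a v = (gaussianReal b v).withDensity
      (fun x => ENNReal.ofReal (Real.exp (((x - b) ^ 2 - (x - a) ^ 2) / (2 * v)))) := by
  rw [gaussianReal_of_var_ne_zero a hv, gaussianReal_of_var_ne_zero b hv,
    ← withDensity_mul _ (measurable_gaussianPDF b v) (by fun_prop)]
  congr 1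
  ext x
  simp only [Pi.mul_apply, gaussianPDF, gaussianPDFReal]
  rw [← ENNReal.ofReal_mul (by positivity), mul_assoc (√(2 * Real.pi * v))⁻¹,
    ← Real.exp_add]
  congr 4
  ring

lemma gm_density_pi {p : ℕ} (a b : Fin p → ℝ) {v : ℝ≥0} (hv : v ≠ 0) :
    gaussianPi a v = (gaussianPi b v).withDensity
      (fun x => ENNReal.ofReal
        (Real.exp (∑ i, ((x i - b i) ^ 2 - (x i - a i) ^ 2) / (2 * v)))) := by
  unfold gaussianPi
  refine Measure.pi_eq fun s hs => ?_
  rw [withDensity_apply _ (MeasurableSet.univ_pi hs), ← lintegral_indicator (MeasurableSet.univ_pi hs)]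
  set X : Fin p → ℝ → ENNReal := fun i => (s i).indicator
    (fun y => ENNReal.ofReal (Real.exp (((y - b i) ^ 2 - (y - a i) ^ 2) / (2 * v)))) with hX
  have hXm : ∀ i, Measurable (X i) := fun i => Measurable.indicator (by fun_prop) (hs i)
  have h1 : ((Set.univ.pi s).indicator fun x : Fin p → ℝ => ENNReal.ofReal
        (Real.exp (∑ i, ((x i - b i) ^ 2 - (x i - a i) ^ 2) / (2 * v))))
      = fun x => ∏ i, X i (x i) := by
    ext x
    by_cases hx : x ∈ Set.univ.pi s
    · rw [Set.indicator_of_mem hx, Real.exp_sum, ENNReal.ofReal_prod_of_nonneg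
        (fun i _ => (Real.exp_pos _).le)]
      refine Finset.prod_congr rfl fun i _ => ?_
      rw [hX]
      simp only
      rw [Set.indicator_of_mem (hx i trivial)]
    · rw [Set.indicator_of_notMem hx]
      simp only [Set.mem_univ_pi, not_forall] at hx
      obtain ⟨i, hi⟩ := hx
      exact (Finset.prod_eq_zero (Finset.mem_univ i) (Set.indicator_of_notMem hi _)).symm
  rw [h1, lintegral_prod_eq_prod_lintegral_of_indepFun Finset.univ
    (fun i (x : Fin p → ℝ) => X i (x i))
    (iIndepFun_pi fun i => (hXm i).aemeasurable)
    (fun i => (hXm i).comp (measurable_pi_apply i))]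
  refine Finset.prod_congr rfl fun i _ => ?_
  rw [(measurePreserving_eval (fun i => gaussianReal (b i) v) i).lintegral_comp (hXm i),
    gm_density_one (a i) (b i) hv, withDensity_apply _ (hs i), ← lintegral_indicator (hs i)]

lemma gm_law {p : ℕ} (μ c : Fin p → ℝ) (v : ℝ≥0) (h : ∑ i, c i ^ 2 * v = 1) :
    (gaussianPi μ v).map (fun x => ∑ i, c i * (x i - μ i)) = gaussianReal 0 1 := by
  unfold gaussianPi
  have hm : Measurable (fun x : Fin p → ℝ => ∑ i, c i * (x i - μ i)) := by fun_prop
  have : IsProbabilityMeasure ((Measure.pi fun i => gaussianReal (μ i) v).map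
    (fun x => ∑ i, c i * (x i - μ i))) := Measure.isProbabilityMeasure_map hm.aemeasurable
  refine Measure.ext_of_charFun ?_
  ext t
  rw [charFun_apply_real, integral_map hm.aemeasurable (by fun_prop), charFun_gaussianReal]
  have e : ∀ x : Fin p → ℝ, Complex.exp (t * ((∑ i, c i * (x i - μ i) : ℝ) : ℂ) * Complex.I)
      = ∏ i, (Complex.exp (-(t * c i * μ i) * Complex.I)
          * Complex.exp (((t * c i : ℝ) : ℂ) * (x i) * Complex.I)) := by
    intro x
    simp_rw [← Complex.exp_add]
    rw [← Complex.exp_sum]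
    congr 1
    push_cast
    rw [Finset.mul_sum, Finset.sum_mul]
    refine Finset.sum_congr rfl fun i _ => ?_
    ring
  simp_rw [e]
  rw [integral_fintype_prod_eq_prod (f := fun i (y : ℝ) =>
    Complex.exp (-(t * c i * μ i) * Complex.I)
          * Complex.exp (((t * c i : ℝ) : ℂ) * y * Complex.I))]
  simp_rw [integral_const_mul, ← charFun_apply_real, charFun_gaussianReal, ← Complex.exp_add]
  rw [← Complex.exp_sum]
  congr 1
  have h' : ∑ i, (c i : ℂ) ^ 2 * ((v : ℝ) : ℂ) = 1 := by exact_mod_cast h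
  calc _ = ∑ i, ((c i : ℂ) ^ 2 * ((v : ℝ) : ℂ)) * (-(t:ℂ) ^ 2 / 2) := by
        refine Finset.sum_congr rfl fun i _ => ?_
        push_cast
        ring
    _ = _ := by
        rw [← Finset.sum_mul, h']
        simp
        ring

lemma gm_half : gaussianReal 0 1 (Set.Ici 0) = ENNReal.ofReal (1 / 2) := by
  have : NullSingletonClass (gaussianReal 0 1) := nullSingletonClass_gaussianReal one_ne_zero
  have h1 : gaussianReal 0 1 (Set.Iio 0) = gaussianReal 0 1 (Set.Ici 0) := by
    have := gaussianReal_map_neg (μ := 0) (v := 1)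
    rw [neg_zero] at this
    conv_rhs => rw [← this, Measure.map_apply measurable_neg measurableSet_Ici]
    rw [measure_congr Iio_ae_eq_Iic]
    congr 1
    ext x
    simp
  have h2 := prob_add_prob_compl (μ := gaussianReal 0 1) (measurableSet_Ici (a := (0:ℝ)))
  rw [Set.compl_Ici, h1] at h2
  have h3 : (gaussianReal 0 1).real (Set.Ici 0) + (gaussianReal 0 1).real (Set.Ici 0) = 1 := by
    rw [Measure.real, ← ENNReal.toReal_add (measure_ne_top _ _) (measure_ne_top _ _), h2]
    simp
  rw [← ofReal_measureReal]
  congr 1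
  linarith

lemma gm_tail_pos {t : ℝ} (ht : 0 ≤ t) :
    gaussianReal 0 1 (Set.Ici t) ≤ ENNReal.ofReal (Real.exp (-t ^ 2 / 2) * (1 / 2)) := by
  have h1 : gaussianReal 0 1 (Set.Ici t) = gaussianReal (-t) 1 (Set.Ici 0) := by
    have := gaussianReal_map_sub_const (μ := 0) (v := 1) t
    rw [zero_sub] at this
    rw [← this, Measure.map_apply (by fun_prop) measurableSet_Ici]
    congr 1
    ext x
    simp
  rw [h1, gm_density_one (-t) 0 one_ne_zero, withDensity_apply _ measurableSet_Ici,
    ENNReal.ofReal_mul (Real.exp_pos _).le, ← gm_half, ← setLIntegral_const]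
  refine setLIntegral_mono' measurableSet_Ici fun x hx => ?_
  refine ENNReal.ofReal_le_ofReal (Real.exp_le_exp.2 ?_)
  have : 0 ≤ x * t := mul_nonneg hx ht
  simp only [NNReal.coe_one]
  linarith

lemma gm_tail_neg {t : ℝ} (ht : t ≤ 0) :
    gaussianReal 0 1 (Set.Ici t) ≤ ENNReal.ofReal (1 / 2 - t) := by
  have h1 : gaussianReal 0 1 (Set.Ico t 0) ≤ ENNReal.ofReal (-t) := by
    rw [gaussianReal_apply _ one_ne_zero]
    calc _ ≤ ∫⁻ x in Set.Ico t 0, 1 := by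
          refine lintegral_mono fun x => ?_
          rw [gaussianPDF, ENNReal.ofReal_le_one, gaussianPDFReal]
          refine mul_le_one₀ (inv_le_one_of_one_le₀ ?_) (Real.exp_pos _).le ?_
          · rw [Real.one_le_sqrt]
            have := Real.pi_gt_three
            simp only [NNReal.coe_one]
            linarith
          · rw [Real.exp_le_one_iff]
            simp only [NNReal.coe_one]
            nlinarith [sq_nonneg (x - 0)]
      _ = _ := by simp
  rw [← Set.Ico_union_Ici_eq_Ici ht]
  refine (measure_union_le _ _).trans ?_
  rw [gm_half, show (1 / 2 - t) = -t + 1 / 2 by ring,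
    ENNReal.ofReal_add (by linarith) (by norm_num)]
  gcongr

lemma gm_numeric {ε δ c t : ℝ} (hε0 : 0 < ε) (hε1 : ε < 1) (hδ0 : 0 < δ) (hδ1 : δ < 1)
    (hc : 0 < c) (hc2 : c ^ 2 = 2 * Real.log (1.25 / δ)) (ht : c - ε / (2 * c) ≤ t) :
    gaussianReal 0 1 (Set.Ici t) ≤ ENNReal.ofReal δ := by
  refine (measure_mono (Set.Ici_subset_Ici.2 ht)).trans ?_
  have hδe : δ = 1.25 * Real.exp (-c ^ 2 / 2) := by
    rw [show -c ^ 2 / 2 = - Real.log (1.25 / δ) by linarith, Real.exp_neg,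
      Real.exp_log (by positivity)]
    field_simp
  rcases le_total 0 (c - ε / (2 * c)) with h | h
  · refine (gm_tail_pos h).trans (ENNReal.ofReal_le_ofReal ?_)
    have h1 : -(c - ε / (2 * c)) ^ 2 / 2 ≤ -c ^ 2 / 2 + 1 / 2 := by
      have e1 : (c - ε / (2 * c)) ^ 2 = c ^ 2 - ε + (ε / (2 * c)) ^ 2 := by
        field_simp
        ring
      rw [e1]
      nlinarith [sq_nonneg (ε / (2 * c))]
    have h2 : Real.exp (1 / 2) ≤ 2.5 := by
      have h3 : Real.exp (1 / 2) ^ 2 = Real.exp 1 := by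
        rw [← Real.exp_nat_mul]; norm_num
      nlinarith [Real.exp_one_lt_d9, Real.exp_pos (1 / 2)]
    calc _ ≤ Real.exp (-c ^ 2 / 2 + 1 / 2) * (1 / 2) := by gcongr
      _ = Real.exp (-c ^ 2 / 2) * Real.exp (1 / 2) * (1 / 2) := by rw [Real.exp_add]
      _ ≤ Real.exp (-c ^ 2 / 2) * 2.5 * (1 / 2) := by gcongr
      _ = δ := by rw [hδe]; ring
  · refine (gm_tail_neg h).trans (ENNReal.ofReal_le_ofReal ?_)
    have h1 : c ^ 2 ≤ 1 / 2 := by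
      have e1 : c * (c - ε / (2 * c)) = c ^ 2 - ε / 2 := by
        field_simp
      nlinarith
    have h2 : 0.4 ≤ c ^ 2 := by
      have := Real.one_sub_inv_le_log_of_pos (x := 1.25 / δ) (by positivity)
      have e : (1.25 / δ)⁻¹ = 0.8 * δ := by
        field_simp
        norm_num
      rw [e] at this
      linarith
    have h3 : 0.6 ≤ c := by nlinarith
    have h4 : ε / (2 * c) ≤ c + 0.2 := by
      rw [div_le_iff₀ (by positivity)]
      nlinarith
    have h5 := Real.add_one_le_exp (-c ^ 2 / 2)
    linarith

/-- **The Gaussian mechanism.** If `‖μ₁ - μ₂‖₂ ≤ s` and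
`σ² = 2 (s²/ε²) ln(1.25/δ)`, then the Gaussian measures with means `μ₁`, `μ₂`
and covariance `σ²·I` satisfy the `(ε,δ)`-differential privacy inequality. -/
theorem gaussian_mechanism {p : ℕ} (hp : 1 ≤ p) (s ε δ : ℝ)
    (hs : 0 < s) (hε0 : 0 < ε) (hε1 : ε < 1) (hδ0 : 0 < δ) (hδ1 : δ < 1)
    (σsq : ℝ) (hσsq : σsq = 2 * (s ^ 2 / ε ^ 2) * Real.log (1.25 / δ))
    (μ₁ μ₂ : Fin p → ℝ)
    (hμ : Real.sqrt (∑ i, (μ₁ i - μ₂ i) ^ 2) ≤ s) :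
    ∀ S : Set (Fin p → ℝ), MeasurableSet S →
      gaussianPi μ₁ σsq.toNNReal S
        ≤ ENNReal.ofReal (Real.exp ε) * gaussianPi μ₂ σsq.toNNReal S
          + ENNReal.ofReal δ := by
  intro S hS
  have hlog : 0 < Real.log (1.25 / δ) := by
    apply Real.log_pos
    rw [lt_div_iff₀ hδ0]
    linarith
  obtain ⟨c, hc, hc2⟩ : ∃ c : ℝ, 0 < c ∧ c ^ 2 = 2 * Real.log (1.25 / δ) :=
    ⟨Real.sqrt (2 * Real.log (1.25 / δ)), Real.sqrt_pos.2 (by positivity),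
      Real.sq_sqrt (by positivity)⟩
  obtain ⟨σ, hσ⟩ : ∃ σ : ℝ, σ = c * s / ε := ⟨_, rfl⟩
  have hσ0 : 0 < σ := by rw [hσ]; positivity
  have hσ2 : σsq = σ ^ 2 := by
    rw [hσsq, hσ, div_pow, mul_pow, hc2]
    ring
  set v := σsq.toNNReal with hvdef
  have hv : (v : ℝ) = σ ^ 2 := by
    rw [hvdef, Real.coe_toNNReal _ (by rw [hσ2]; positivity), hσ2]
  have hv0 : v ≠ 0 := by
    intro h
    rw [h] at hv
    have : 0 < σ ^ 2 := by positivity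
    simp at hv
    linarith
  set D := Real.sqrt (∑ i, (μ₁ i - μ₂ i) ^ 2) with hD
  have hD2 : D ^ 2 = ∑ i, (μ₁ i - μ₂ i) ^ 2 :=
    Real.sq_sqrt (Finset.sum_nonneg fun i _ => sq_nonneg _)
  rcases (Real.sqrt_nonneg (∑ i, (μ₁ i - μ₂ i) ^ 2)).eq_or_lt with h0 | hDpos
  · have hz : ∑ i, (μ₁ i - μ₂ i) ^ 2 = 0 := by
      rw [← hD2, hD, ← h0]; norm_num
    rw [Finset.sum_eq_zero_iff_of_nonneg (fun i _ => sq_nonneg _)] at hz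
    have : μ₁ = μ₂ := by
      ext i
      have := hz i (Finset.mem_univ i)
      have := pow_eq_zero_iff (two_ne_zero) |>.1 this
      linarith
    rw [this]
    refine le_add_right (le_mul_of_one_le_left (zero_le) ?_)
    rw [ENNReal.one_le_ofReal]
    exact Real.one_le_exp hε0.le
  · rw [← hD] at hDpos
    set r : (Fin p → ℝ) → ℝ :=
      fun x => ∑ i, ((x i - μ₂ i) ^ 2 - (x i - μ₁ i) ^ 2) / (2 * v) with hr
    have hrm : Measurable r := by fun_prop
    have hA : MeasurableSet {x | r x ≤ ε} := measurableSet_le hrm measurable_const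
    have hsub : S ⊆ (S ∩ {x | r x ≤ ε}) ∪ {x | ε < r x} := by
      intro x hx
      rcases le_or_gt (r x) ε with h | h
      · exact Or.inl ⟨hx, h⟩
      · exact Or.inr h
    refine (measure_mono hsub).trans ((measure_union_le _ _).trans (add_le_add ?_ ?_))
    · rw [gm_density_pi μ₁ μ₂ hv0, withDensity_apply _ (hS.inter hA)]
      calc _ ≤ ∫⁻ x in S ∩ {x | r x ≤ ε}, ENNReal.ofReal (Real.exp ε) ∂(gaussianPi μ₂ v) := by
            refine setLIntegral_mono' (hS.inter hA) fun x hx => ?_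
            exact ENNReal.ofReal_le_ofReal (Real.exp_le_exp.2 hx.2)
        _ = ENNReal.ofReal (Real.exp ε) * gaussianPi μ₂ v (S ∩ {x | r x ≤ ε}) :=
            setLIntegral_const _ _
        _ ≤ _ := by gcongr; exact Set.inter_subset_left
    · have hlaw := gm_law μ₁ (fun i => (μ₁ i - μ₂ i) / (D * σ)) v (by
        rw [← Finset.sum_mul]
        simp_rw [div_pow]
        rw [← Finset.sum_div, ← hD2, hv]
        field_simp)
      have ht : c - ε / (2 * c) ≤ ε * σ / D - D / (2 * σ) := by
        have e1 : c ≤ ε * σ / D := by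
          rw [le_div_iff₀ hDpos, hσ]
          calc c * D ≤ c * s := by gcongr
            _ = _ := by field_simp
        have e2 : D / (2 * σ) ≤ ε / (2 * c) := by
          rw [hσ, div_le_div_iff₀ (by positivity) (by positivity)]
          calc D * (2 * c) ≤ s * (2 * c) := by gcongr
            _ = _ := by field_simp
        linarith
      refine le_trans ?_ (gm_numeric hε0 hε1 hδ0 hδ1 hc hc2 ht)
      rw [← hlaw, Measure.map_apply (by fun_prop) measurableSet_Ici]
      refine measure_mono fun x hx => ?_
      have hx' : ε < r x := hx
      have hrx : r x = (2 * ∑ i, (μ₁ i - μ₂ i) * (x i - μ₁ i) + D ^ 2) / (2 * σ ^ 2) := by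
        rw [hr]
        simp only
        rw [← Finset.sum_div, hD2, hv, Finset.mul_sum, ← Finset.sum_add_distrib]
        congr 1
        refine Finset.sum_congr rfl fun i _ => ?_
        ring
      have hT : ∑ i, (μ₁ i - μ₂ i) / (D * σ) * (x i - μ₁ i)
          = (∑ i, (μ₁ i - μ₂ i) * (x i - μ₁ i)) / (D * σ) := by
        rw [Finset.sum_div]
        refine Finset.sum_congr rfl fun i _ => ?_
        ring
      rw [hrx, lt_div_iff₀ (by positivity)] at hx'
      simp only [Set.mem_preimage, Set.mem_Ici]
      rw [hT, le_div_iff₀ (by positivity)]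
      have e3 : (ε * σ / D - D / (2 * σ)) * (D * σ) = ε * σ ^ 2 - D ^ 2 / 2 := by
        field_simp
      rw [e3]
      linarith
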